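/- arXiv:0909.2613 — 4 statements merged into one kernel-verified Lean document; each statement's English description precedes it below -/
import Mathlib

section
/- Let k ≥ 2 be an integer, let G be a graph, let L be a k-L(2,1)-labelling of G, and let v be a vertex of G of degree k−1. Then L(v) = 0 or L(v) = k. -/
/-- For an integer `k`, a `k`-L(2,1)-labelling of a graph `G` is a map from the vertices
to `{0,1,…,k}` such that labels of adjacent vertices differ by at least `2` and vertices
at distance exactly `2` get distinct labels. -/
def IsL21Labelling {V : Type*} (G : SimpleGraph V) (k : ℕ) (L : V → ℕ) : Prop :=
  (∀ v, L v ≤ k) ∧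
  (∀ x y, G.Adj x y → 2 ≤ |(L x : ℤ) - (L y : ℤ)|) ∧
  (∀ x y, G.dist x y = 2 → L x ≠ L y)

/-- If `k ≥ 2`, `L` is a `k`-L(2,1)-labelling of `G` and `v` has degree `k - 1`,
then `L v = 0` or `L v = k`. -/
theorem stmt_0 {V : Type*} [Fintype V] (G : SimpleGraph V) [DecidableRel G.Adj]
    (k : ℕ) (hk : 2 ≤ k) (L : V → ℕ) (hL : IsL21Labelling G k L)
    (v : V) (hv : G.degree v = k - 1) :
    L v = 0 ∨ L v = k := by
  obtain ⟨h1, h2, h3⟩ := hL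
  by_contra hcon
  push Not at hcon
  obtain ⟨h0, hk'⟩ := hcon
  have hle := h1 v
  have hinj : Set.InjOn L (G.neighborFinset v : Set V) := by
    intro x hx y hy hxy
    simp only [Finset.mem_coe, SimpleGraph.mem_neighborFinset] at hx hy
    by_contra hne
    have hnadj : ¬ G.Adj x y := by
      intro h
      have := h2 x y h
      rw [hxy] at this
      simp at this
    let w : G.Walk x y := SimpleGraph.Walk.cons hx.symm (SimpleGraph.Walk.cons hy SimpleGraph.Walk.nil)
    have hd : G.dist x y ≤ 2 := SimpleGraph.dist_le w
    have hr : G.Reachable x y := ⟨w⟩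
    have hd0 : G.dist x y ≠ 0 := fun h => hne (hr.dist_eq_zero_iff.mp h)
    have hd1 : G.dist x y ≠ 1 := fun h => hnadj (SimpleGraph.dist_eq_one_iff_adj.mp h)
    exact h3 x y (by omega) hxy
  have hsub : (G.neighborFinset v).image L ⊆
      Finset.range (k + 1) \ Finset.Icc (L v - 1) (L v + 1) := by
    intro a ha
    obtain ⟨x, hx, rfl⟩ := Finset.mem_image.mp ha
    rw [SimpleGraph.mem_neighborFinset] at hx
    have e1 := h1 x
    have e2 := h2 v x hx
    simp only [Finset.mem_sdiff, Finset.mem_range, Finset.mem_Icc]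
    rw [le_abs] at e2
    omega
  have hc := Finset.card_le_card hsub
  have hsub2 : Finset.Icc (L v - 1) (L v + 1) ⊆ Finset.range (k + 1) := by
    intro a ha
    simp only [Finset.mem_range, Finset.mem_Icc] at *
    omega
  rw [Finset.card_image_of_injOn hinj, SimpleGraph.card_neighborFinset_eq_degree, hv,
    Finset.card_sdiff_of_subset hsub2, Finset.card_range, Nat.card_Icc] at hc
  omega
end

section
/- Let G be a graph with an almost two-coloured perfect matching, and let v_1, v_2, v_3, v_4 be four distinct vertices of G such that v_1v_2, v_2v_3, v_3v_4, v_4v_1 are all edges of G. Then exactly two of the four vertices v_1, v_2, v_3, v_4 are coloured black (and the other two white). -/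
/-- An almost two-coloured perfect matching of `G`: a two-colouring (black/white,
modelled by `Bool` with `true` = black) of the vertices in which every vertex of degree
at least two (i.e. having two distinct neighbours) has exactly one neighbour of the
same colour. -/
def IsAlmostTCPM {V : Type*} (G : SimpleGraph V) (c : V → Bool) : Prop :=
  ∀ v, (∃ w₁ w₂, w₁ ≠ w₂ ∧ G.Adj v w₁ ∧ G.Adj v w₂) →
    ∃! w, G.Adj v w ∧ c w = c v

/-- If `G` has an almost two-coloured perfect matching and `v₁, v₂, v₃, v₄` are four
distinct vertices forming a four-cycle `v₁v₂, v₂v₃, v₃v₄, v₄v₁`, then exactly two of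
them are coloured black (and the other two white). -/
theorem stmt_2 {V : Type*} (G : SimpleGraph V) (c : V → Bool)
    (hc : IsAlmostTCPM G c) (v₁ v₂ v₃ v₄ : V)
    (hdist : [v₁, v₂, v₃, v₄].Pairwise (· ≠ ·))
    (h12 : G.Adj v₁ v₂) (h23 : G.Adj v₂ v₃) (h34 : G.Adj v₃ v₄) (h41 : G.Adj v₄ v₁) :
    [c v₁, c v₂, c v₃, c v₄].count true = 2 := by
  have key : ∀ v a b, a ≠ b → G.Adj v a → G.Adj v b → ¬ (c a = c v ∧ c b = c v) := by
    rintro v a b hab ha hb ⟨h1, h2⟩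
    obtain ⟨w, -, hw⟩ := hc v ⟨a, b, hab, ha, hb⟩
    exact hab ((hw a ⟨ha, h1⟩).trans (hw b ⟨hb, h2⟩).symm)
  have h13 : v₁ ≠ v₃ := by simp at hdist; tauto
  have h24 : v₂ ≠ v₄ := by simp at hdist; tauto
  have k1 := key v₁ v₂ v₄ h24 h12 h41.symm
  have k2 := key v₂ v₁ v₃ h13 h12.symm h23
  have k3 := key v₃ v₂ v₄ h24 h23.symm h34
  have k4 := key v₄ v₁ v₃ h13 h41 h34.symm
  clear key
  generalize c v₁ = a at *
  generalize c v₂ = b at *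
  generalize c v₃ = d at *
  generalize c v₄ = e at *
  cases a <;> cases b <;> cases d <;> cases e <;> simp_all
end

section
/- Let G be a cubic graph (every vertex has degree three) and let H be the corresponding auxiliary graph. If G has a two-coloured perfect matching, then H has a good coloured orientation. -/
/-- A two-coloured perfect matching of `G`: a two-colouring (black/white, modelled by
`Bool`) of the vertices in which every vertex has exactly one neighbour of the same
colour. -/
def IsTCPM {V : Type*} (G : SimpleGraph V) (c : V → Bool) : Prop :=
  ∀ v, ∃! w, G.Adj v w ∧ c w = c v

/-- `v` has degree three in `H`: it has exactly three distinct neighbours. -/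
def HasDeg3 {W : Type*} (H : SimpleGraph W) (v : W) : Prop :=
  ∃ w₁ w₂ w₃, w₁ ≠ w₂ ∧ w₁ ≠ w₃ ∧ w₂ ≠ w₃ ∧
    H.Adj v w₁ ∧ H.Adj v w₂ ∧ H.Adj v w₃ ∧
    ∀ w, H.Adj v w → w = w₁ ∨ w = w₂ ∨ w = w₃

/-- The potential vertices of the auxiliary graph `H` obtained from a graph `G`:
for every vertex `x` of `G` a vertex `orig x`, and for every edge `uv` of `G` the six
new vertices of the gadget replacing `uv`.  Here `dvert u v` denotes the gadget
neighbour of `u` on the edge `uv` (so `dvert u v` is the vertex `d` and `dvert v u`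
is the vertex `o` of the gadget), while the vertices `i`, `j`, `in`, `out` of the
gadget on an edge `e` are `ivert e`, `jvert e`, `invert e`, `outvert e`. -/
inductive AuxV (V : Type*)
| orig (x : V)
| dvert (x y : V)
| ivert (e : Sym2 V)
| jvert (e : Sym2 V)
| invert (e : Sym2 V)
| outvert (e : Sym2 V)

/-- The actual vertices of the auxiliary graph among the potential ones. -/
def AuxOk {V : Type*} (G : SimpleGraph V) : AuxV V → Prop
| .orig _ => True
| .dvert x y => G.Adj x y
| .ivert e => e ∈ G.edgeSet
| .jvert e => e ∈ G.edgeSet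
| .invert e => e ∈ G.edgeSet
| .outvert e => e ∈ G.edgeSet

/-- The adjacency generating relation of the auxiliary graph: for each edge `uv` of
`G`, the gadget edges `u d`, `d i`, `d j`, `i o`, `j o`, `o v`, `i in`, `j out`
(with `d = dvert u v` and `o = dvert v u`). -/
def AuxAdj {V : Type*} (G : SimpleGraph V) : AuxV V → AuxV V → Prop := fun a b =>
  (∃ x y, G.Adj x y ∧ a = .orig x ∧ b = .dvert x y) ∨
  (∃ x y, G.Adj x y ∧ a = .dvert x y ∧ b = .ivert s(x, y)) ∨
  (∃ x y, G.Adj x y ∧ a = .dvert x y ∧ b = .jvert s(x, y)) ∨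
  (∃ e, e ∈ G.edgeSet ∧ a = .ivert e ∧ b = .invert e) ∨
  (∃ e, e ∈ G.edgeSet ∧ a = .jvert e ∧ b = .outvert e)

/-- The vertex set of the auxiliary graph of `G`. -/
def AuxVert {V : Type*} (G : SimpleGraph V) : Type _ := {z : AuxV V // AuxOk G z}

/-- The auxiliary graph `H` of `G`. -/
def AuxGraph {V : Type*} (G : SimpleGraph V) : SimpleGraph (AuxVert G) :=
  SimpleGraph.fromRel (fun a b => AuxAdj G a.1 b.1)

/-- The outvertices of the auxiliary graph. -/
def IsOutV {V : Type*} (G : SimpleGraph V) (z : AuxVert G) : Prop :=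
  ∃ e, z.1 = AuxV.outvert e

/-- `(col, orient)` is a coloured orientation of the graph `H` (with distinguished
outvertices given by `isOut`): a two-colouring `col` of the vertices together with an
orientation `orient` of a subset of the edges (`orient x y` meaning that the edge `xy`
is oriented from `x` to `y`) such that: every vertex is adjacent to at most one vertex
of the opposite colour; an edge is oriented (in exactly one direction) if and only if
it is monochromatic; every vertex other than the outvertices has outdegree at most two
and indegree at most one; and every outvertex has indegree zero. -/
def IsColOrient {W : Type*} (H : SimpleGraph W) (isOut : W → Prop)
    (col : W → Bool) (orient : W → W → Prop) : Prop :=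
  (∀ x y, orient x y → H.Adj x y) ∧
  (∀ x y, orient x y → ¬ orient y x) ∧
  (∀ x y, H.Adj x y → ((orient x y ∨ orient y x) ↔ col x = col y)) ∧
  (∀ v w₁ w₂, H.Adj v w₁ → H.Adj v w₂ → col w₁ ≠ col v → col w₂ ≠ col v → w₁ = w₂) ∧
  (∀ v, ¬ isOut v → ∀ w₁ w₂ w₃, orient v w₁ → orient v w₂ → orient v w₃ →
    w₁ = w₂ ∨ w₁ = w₃ ∨ w₂ = w₃) ∧
  (∀ v, ¬ isOut v → ∀ w₁ w₂, orient w₁ v → orient w₂ v → w₁ = w₂) ∧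
  (∀ v, isOut v → ∀ w, ¬ orient w v)

/-- A coloured orientation is good if every vertex of degree three is adjacent to
exactly one vertex of the opposite colour and has indegree exactly one and outdegree
exactly one. -/
def IsGoodColOrient {W : Type*} (H : SimpleGraph W) (isOut : W → Prop)
    (col : W → Bool) (orient : W → W → Prop) : Prop :=
  IsColOrient H isOut col orient ∧
  ∀ v, HasDeg3 H v →
    (∃! w, H.Adj v w ∧ col w ≠ col v) ∧
    (∃! w, orient w v) ∧
    (∃! w, orient v w)


/-- A 2-regular symmetric irreflexive relation can be consistently oriented. -/
theorem two_regular_orient {V : Type*} (D : V → V → Prop) (hs : ∀ x y, D x y → D y x)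
    (hi : ∀ x, ¬ D x x)
    (h2 : ∀ x y, D x y → ∃ z, (D y z ∧ z ≠ x) ∧ ∀ z', D y z' → z' ≠ x → z' = z) :
    ∃ P : V → V → Prop, (∀ x y, P x y → D x y) ∧ (∀ x y, D x y → (P x y ↔ ¬ P y x)) ∧
      (∀ x y z, D x y → D y z → x ≠ z → (P x y ↔ P y z)) := by
  classical
  choose o ho huniq using h2
  let T := {p : V × V // D p.1 p.2}
  let r : T → T := fun p => ⟨(p.1.2, p.1.1), hs _ _ p.2⟩
  let s : T → T := fun p => ⟨(p.1.2, o _ _ p.2), (ho _ _ p.2).1⟩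
  have hrr : ∀ p, r (r p) = p := fun p => rfl
  have hoo : ∀ x y (h : D x y) (h' : D (o x y h) y), o (o x y h) y h' = x := by
    intro x y h h'
    exact (huniq _ _ h' x (hs _ _ h) (ho x y h).2.symm).symm
  have hsr : ∀ p, s (r (s (r p))) = p := by
    rintro ⟨⟨x, y⟩, h⟩
    apply Subtype.ext
    exact Prod.ext rfl (hoo y x _ _)
  have hrs : ∀ p, r (s (r (s p))) = p := by
    intro p
    have := congrArg r (hsr (r p))
    simpa [hrr] using this
  let σ : Equiv.Perm T := ⟨s, fun p => r (s (r p)), hrs, hsr⟩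
  have hrσ : ∀ p, r (σ p) = σ⁻¹ (r p) := fun p => rfl
  have hrσ' : ∀ p, r (σ⁻¹ p) = σ (r p) := fun p => rfl
  have hpow : ∀ (n : ℕ) p, r ((σ ^ n) p) = (σ⁻¹ ^ n) (r p) := by
    intro n
    induction n with
    | zero => intro p; rfl
    | succ k ih => intro p; rw [pow_succ, pow_succ, Equiv.Perm.mul_apply, Equiv.Perm.mul_apply, ih, hrσ]
  have hpow' : ∀ (n : ℕ) p, r ((σ⁻¹ ^ n) p) = (σ ^ n) (r p) := by
    intro n
    induction n with
    | zero => intro p; rfl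
    | succ k ih => intro p; rw [pow_succ, pow_succ, Equiv.Perm.mul_apply, Equiv.Perm.mul_apply, ih, hrσ']
  have hz : ∀ (n : ℤ) p, r ((σ ^ n) p) = (σ ^ (-n)) (r p) := by
    intro n p
    obtain ⟨m, rfl | rfl⟩ := n.eq_nat_or_neg
    · have := hpow m p
      rw [inv_pow] at this
      simpa [zpow_neg] using this
    · have := hpow' m p
      rw [inv_pow] at this
      simpa [zpow_neg] using this
  have hne1 : ∀ p, r p ≠ p := by
    rintro ⟨⟨x, y⟩, h⟩ he
    have h1 : y = x := congrArg (fun q : T => q.1.1) he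
    subst h1
    exact hi _ h
  have hne2 : ∀ p, r p ≠ σ p := by
    rintro ⟨⟨x, y⟩, h⟩ he
    have h1 : x = o x y h := congrArg (fun q : T => q.1.2) he
    exact (ho x y h).2 h1.symm
  have hnsc : ∀ p, ¬ σ.SameCycle p (r p) := by
    rintro p ⟨n, hn⟩
    obtain ⟨k, hk | hk⟩ := n.even_or_odd'
    · apply hne1 ((σ ^ k) p)
      rw [hz, ← hn, ← Equiv.Perm.mul_apply, ← zpow_add]
      congr 2; omega
    · apply hne2 ((σ ^ k) p)
      rw [hz, ← hn, ← Equiv.Perm.mul_apply, ← zpow_add, ← Equiv.Perm.mul_apply, ← zpow_one_add]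
      congr 2; omega
  let S : Setoid T := Equiv.Perm.SameCycle.setoid σ
  let q : T → Quotient S := fun p => Quotient.mk S p
  let _ : LinearOrder (Quotient S) := linearOrderOfSTO (WellOrderingRel (α := Quotient S))
  have hq1 : ∀ p, q (σ p) = q p := by
    intro p
    apply Quotient.sound
    exact Equiv.Perm.sameCycle_apply_left.2 (Equiv.Perm.SameCycle.refl _ _)
  have hq2 : ∀ p, q (r (σ p)) = q (r p) := by
    intro p
    rw [hrσ, ← hq1 (σ⁻¹ (r p))]
    exact congrArg q (σ.apply_symm_apply (r p))
  have hq3 : ∀ p, q p ≠ q (r p) := fun p h => hnsc p (Quotient.exact h)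
  refine ⟨fun x y => ∃ h : D x y, q ⟨(x, y), h⟩ < q (r ⟨(x, y), h⟩), ?_, ?_, ?_⟩
  · rintro x y ⟨h, -⟩; exact h
  · intro x y h
    have h3 := hq3 ⟨(x, y), h⟩
    constructor
    · rintro ⟨_, h1⟩ ⟨_, h4⟩
      exact lt_asymm h1 h4
    · intro h4
      refine ⟨h, lt_of_le_of_ne (not_lt.1 fun h5 => h4 ⟨hs _ _ h, h5⟩) h3⟩
  · intro x y z h h' hne
    have hzz : z = o x y h := huniq x y h z h' hne.symm
    subst hzz
    have e1 := hq1 ⟨(x, y), h⟩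
    have e2 := hq2 ⟨(x, y), h⟩
    constructor
    · rintro ⟨_, h1⟩
      refine ⟨h', ?_⟩
      rw [← e1, ← e2] at h1
      exact h1
    · rintro ⟨_, h1⟩
      refine ⟨h, ?_⟩
      rw [← e1, ← e2]
      exact h1

/-- Adjacency of potential vertices, in matching form. -/
def AA {V : Type*} : AuxV V → AuxV V → Prop
| .orig x, .dvert a _ => x = a
| .dvert a _, .orig x => x = a
| .dvert a b, .ivert e => e = s(a, b)
| .ivert e, .dvert a b => e = s(a, b)
| .dvert a b, .jvert e => e = s(a, b)
| .jvert e, .dvert a b => e = s(a, b)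
| .ivert e, .invert e' => e = e'
| .invert e, .ivert e' => e = e'
| .jvert e, .outvert e' => e = e'
| .outvert e, .jvert e' => e = e'
| _, _ => False

theorem adj_iff_AA {V : Type*} (G : SimpleGraph V) (a b : AuxVert G) :
    (AuxGraph G).Adj a b ↔ AA a.1 b.1 := by
  unfold AuxGraph
  rw [SimpleGraph.fromRel_adj]
  have hne : a ≠ b ↔ a.1 ≠ b.1 := not_congr Subtype.ext_iff
  rw [hne]
  clear hne
  obtain ⟨a, ha⟩ := a
  obtain ⟨b, hb⟩ := b
  dsimp only
  cases a <;> cases b <;> simp [AuxAdj, AA, AuxOk] at * <;> grind [SimpleGraph.mem_edgeSet]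

/-- The colouring of the auxiliary graph. -/
def colA {V : Type*} (c : V → Bool) (t h : Sym2 V → V) : AuxV V → Bool
| .orig x => c x
| .dvert x y => if c x = c y then !(c x) else c x
| .ivert e => if c (t e) = c (h e) then !(c (t e)) else c (t e)
| .jvert e => if c (t e) = c (h e) then !(c (h e)) else c (h e)
| .invert e => c (t e)
| .outvert e => c (h e)

/-- The orientation of the auxiliary graph. -/
def oriA {V : Type*} (c : V → Bool) (t h : Sym2 V → V) (P : V → V → Prop) :
    AuxV V → AuxV V → Prop
| .orig x, .dvert a b => x = a ∧ P a b
| .dvert a b, .orig x => x = a ∧ P b a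
| .dvert a b, .ivert e => e = s(a, b) ∧ t e = a
| .ivert e, .dvert a b => e = s(a, b) ∧ t e = b ∧ c a = c b
| .dvert a b, .jvert e => e = s(a, b) ∧ t e = b ∧ c a = c b
| .jvert e, .dvert a b => e = s(a, b) ∧ ((t e = a ∧ c a = c b) ∨ (t e = b ∧ c a ≠ c b))
| .ivert e, .invert e' => e = e' ∧ c (t e) ≠ c (h e)
| .outvert e, .jvert e' => e = e' ∧ c (t e) ≠ c (h e)
| _, _ => False

theorem exU {V : Type*} {G : SimpleGraph V} {p : AuxV V → Prop} (w : AuxV V) (hw : AuxOk G w)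
    (hp : p w) (hu : ∀ w', AuxOk G w' → p w' → w' = w) : ∃! z : AuxVert G, p z.1 :=
  ⟨⟨w, hw⟩, hp, fun z hz => Subtype.ext (hu _ z.2 hz)⟩

set_option maxHeartbeats 4000000 in
theorem stmt_14 {V : Type*} (G : SimpleGraph V) (hcubic : ∀ v, HasDeg3 G v)
    (c : V → Bool) (hc : IsTCPM G c) :
    ∃ (col : AuxVert G → Bool) (orient : AuxVert G → AuxVert G → Prop),
      IsGoodColOrient (AuxGraph G) (IsOutV G) col orient := by
  classical
  -- the three neighbours: `m` matched, `a`, `b` unmatched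
  have hN : ∀ v, ∃ m a b, a ≠ b ∧ G.Adj v m ∧ c m = c v ∧ G.Adj v a ∧ c a ≠ c v ∧
      G.Adj v b ∧ c b ≠ c v ∧ ∀ w, G.Adj v w → w = m ∨ w = a ∨ w = b := by
    intro v
    obtain ⟨x, y, z, hxy, hxz, hyz, hx, hy, hz, hall⟩ := hcubic v
    obtain ⟨m, ⟨hm, hcm⟩, hu⟩ := hc v
    have ux := hu x
    have uy := hu y
    have uz := hu z
    rcases hall m hm with rfl | rfl | rfl
    · exact ⟨m, y, z, by grind⟩
    · exact ⟨m, x, z, by grind⟩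
    · exact ⟨m, x, y, by grind⟩
  obtain ⟨P, hPD, hPn, hPt⟩ := two_regular_orient (fun x y => G.Adj x y ∧ c x ≠ c y)
    (fun x y h => ⟨h.1.symm, h.2.symm⟩) (fun x h => h.2 rfl) (by
      rintro x y ⟨hxy, hcxy⟩
      obtain ⟨m, a, b, hab, hm, hcm, ha, hca, hb, hcb, hall⟩ := hN y
      have hyx := hxy.symm
      rcases hall x hyx with rfl | rfl | rfl
      · exact absurd hcm hcxy
      · exact ⟨b, by grind⟩
      · exact ⟨a, by grind⟩)
  have hN' : ∀ v, ∃ m a b, a ≠ b ∧ G.Adj v m ∧ c m = c v ∧ G.Adj v a ∧ c a ≠ c v ∧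
      G.Adj v b ∧ c b ≠ c v ∧ P a v ∧ P v b ∧ ¬ P v a ∧ ¬ P b v ∧
      ∀ w, G.Adj v w → w = m ∨ w = a ∨ w = b := by
    intro v
    obtain ⟨m, a, b, hab, hm, hcm, ha, hca, hb, hcb, hall⟩ := hN v
    have h1 := hPt a v b ⟨ha.symm, hca⟩ ⟨hb, hcb.symm⟩ hab
    have h2 := hPn a v ⟨ha.symm, hca⟩
    have h3 := hPn b v ⟨hb.symm, hcb⟩
    by_cases hp : P a v
    · exact ⟨m, a, b, by grind⟩
    · exact ⟨m, b, a, by grind⟩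
  clear hN hPt hc hcubic
  have hth : ∀ e : Sym2 V, ∃ x y, e = s(x, y) ∧ (e ∈ G.edgeSet → c x ≠ c y → P x y) := by
    intro e
    induction e with
    | h x y =>
      by_cases hp : P x y
      · exact ⟨x, y, rfl, fun _ _ => hp⟩
      · refine ⟨y, x, Sym2.eq_swap, fun h1 h2 => ?_⟩
        have := hPn y x ⟨(SimpleGraph.mem_edgeSet G).1 h1 |>.symm, h2⟩
        exact this.2 hp
  choose t h hst hP using hth
  -- facts about a gadget, from the viewpoint of `s(a, b)`
  have hinc : ∀ a b, (t s(a, b) = a ∧ h s(a, b) = b) ∨ (t s(a, b) = b ∧ h s(a, b) = a) := by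
    intro a b
    have := hst s(a, b)
    rw [Sym2.eq_iff] at this
    grind
  have hP' : ∀ a b, G.Adj a b → c a ≠ c b → (P a b ↔ t s(a, b) = a) := by
    intro a b hab hcab
    have h1 := hP s(a, b) hab
    have h2 := hPn a b ⟨hab, hcab⟩
    have h3 := hab.ne
    grind
  have hPD1 : ∀ x y, P x y → G.Adj x y := fun x y h => (hPD x y h).1
  have hPD2 : ∀ x y, P x y → c x ≠ c y := fun x y h => (hPD x y h).2
  have hsw : ∀ a b : V, s(a, b) = s(b, a) := fun a b => Sym2.eq_swap
  have hgood : ∀ v : AuxVert G, (∀ e, v.1 ≠ .invert e) → (∀ e, v.1 ≠ .outvert e) →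
      (∃! w : AuxVert G, AA v.1 w.1 ∧ colA c t h w.1 ≠ colA c t h v.1) ∧
      (∃! w : AuxVert G, oriA c t h P w.1 v.1) ∧ (∃! w : AuxVert G, oriA c t h P v.1 w.1) := by
    rintro ⟨v, hv⟩ hin hout
    dsimp only at hin hout ⊢
    cases v with
    | orig x =>
      obtain ⟨m, a, b, hab, hm, hcm, ha, hca, hb, hcb, p1, p2, p3, p4, hall⟩ := hN' x
      refine ⟨exU (p := fun w => AA _ w ∧ colA c t h w ≠ colA c t h _) (.dvert x m) hm ?_ ?_,
        exU (p := fun w => oriA c t h P w _) (.dvert x a) ha ?_ ?_,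
        exU (p := fun w => oriA c t h P _ w) (.dvert x b) hb ?_ ?_⟩
      · simp [AA, colA, hcm]
      · intro w hw; cases w <;> simp [AA, colA, AuxOk] at hw ⊢ <;> grind
      · simp [oriA, p1]
      · intro w hw; cases w <;> simp [oriA, AuxOk] at hw ⊢ <;> grind
      · simp [oriA, p2]
      · intro w hw; cases w <;> simp [oriA, AuxOk] at hw ⊢ <;> grind
    | dvert x y =>
      have hv' : G.Adj x y := hv
      have hv'' : G.Adj y x := hv'.symm
      have hne := hv'.ne
      have hi1 := hinc x y
      have hp1 := hP' x y hv'
      have hp2 := hP' y x hv''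
      rw [hsw y x] at hp2
      have hd1 := hPD2 x y
      have hd2 := hPD2 y x
      by_cases hcc : c x = c y
      · rcases hi1 with ⟨ht, hh⟩ | ⟨ht, hh⟩
        · refine ⟨exU (p := fun w => AA _ w ∧ colA c t h w ≠ colA c t h _) (.orig x) ?_ ?_ ?_,
          exU (p := fun w => oriA c t h P w _) (.jvert s(x, y)) ?_ ?_ ?_,
          exU (p := fun w => oriA c t h P _ w) (.ivert s(x, y)) ?_ ?_ ?_⟩
          all_goals first | exact hv' | trivial | skip
          all_goals first | (intro w hw; cases w <;> simp [AA, oriA, colA, AuxOk] at hw ⊢ <;> grind) | (simp [AA, oriA, colA]; grind) | (simp [AA, oriA, colA, *]; done)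
        · refine ⟨exU (p := fun w => AA _ w ∧ colA c t h w ≠ colA c t h _) (.orig x) ?_ ?_ ?_,
          exU (p := fun w => oriA c t h P w _) (.ivert s(x, y)) ?_ ?_ ?_,
          exU (p := fun w => oriA c t h P _ w) (.jvert s(x, y)) ?_ ?_ ?_⟩
          all_goals first | exact hv' | trivial | skip
          all_goals first | (intro w hw; cases w <;> simp [AA, oriA, colA, AuxOk] at hw ⊢ <;> grind) | (simp [AA, oriA, colA]; grind) | (simp [AA, oriA, colA, *]; done)
      · rcases hi1 with ⟨ht, hh⟩ | ⟨ht, hh⟩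
        · refine ⟨exU (p := fun w => AA _ w ∧ colA c t h w ≠ colA c t h _) (.jvert s(x, y)) ?_ ?_ ?_,
          exU (p := fun w => oriA c t h P w _) (.orig x) ?_ ?_ ?_,
          exU (p := fun w => oriA c t h P _ w) (.ivert s(x, y)) ?_ ?_ ?_⟩
          all_goals first | exact hv' | trivial | skip
          all_goals first | (intro w hw; cases w <;> simp [AA, oriA, colA, AuxOk] at hw ⊢ <;> grind) | (simp [AA, oriA, colA]; grind) | (simp [AA, oriA, colA, *]; done)
        · refine ⟨exU (p := fun w => AA _ w ∧ colA c t h w ≠ colA c t h _) (.ivert s(x, y)) ?_ ?_ ?_,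
          exU (p := fun w => oriA c t h P w _) (.jvert s(x, y)) ?_ ?_ ?_,
          exU (p := fun w => oriA c t h P _ w) (.orig x) ?_ ?_ ?_⟩
          all_goals first | exact hv' | trivial | skip
          all_goals first | (intro w hw; cases w <;> simp [AA, oriA, colA, AuxOk] at hw ⊢ <;> grind) | (simp [AA, oriA, colA]; grind) | (simp [AA, oriA, colA, *]; done)
    | ivert e =>
      obtain ⟨x, hx⟩ : ∃ x, t e = x := ⟨_, rfl⟩
      obtain ⟨y, hy⟩ : ∃ y, h e = y := ⟨_, rfl⟩
      have he := hst e
      rw [hx, hy] at he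
      subst he
      have hv' : G.Adj x y := hv
      have hv'' : G.Adj y x := hv'.symm
      have hne := hv'.ne
      by_cases hcc : c x = c y
      · refine ⟨exU (p := fun w => AA _ w ∧ colA c t h w ≠ colA c t h _) (.invert s(x, y)) ?_ ?_ ?_,
          exU (p := fun w => oriA c t h P w _) (.dvert x y) ?_ ?_ ?_,
          exU (p := fun w => oriA c t h P _ w) (.dvert y x) ?_ ?_ ?_⟩
        all_goals first | exact hv' | exact hv'' | trivial | skip
        all_goals first | (intro w hw; cases w <;> simp [AA, oriA, colA, AuxOk] at hw ⊢ <;> grind) | (simp [AA, oriA, colA]; grind) | (simp [AA, oriA, colA, *]; done)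
      · refine ⟨exU (p := fun w => AA _ w ∧ colA c t h w ≠ colA c t h _) (.dvert y x) ?_ ?_ ?_,
          exU (p := fun w => oriA c t h P w _) (.dvert x y) ?_ ?_ ?_,
          exU (p := fun w => oriA c t h P _ w) (.invert s(x, y)) ?_ ?_ ?_⟩
        all_goals first | exact hv' | exact hv'' | trivial | skip
        all_goals first | (intro w hw; cases w <;> simp [AA, oriA, colA, AuxOk] at hw ⊢ <;> grind) | (simp [AA, oriA, colA]; grind) | (simp [AA, oriA, colA, *]; done)
    | jvert e =>
      obtain ⟨x, hx⟩ : ∃ x, t e = x := ⟨_, rfl⟩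
      obtain ⟨y, hy⟩ : ∃ y, h e = y := ⟨_, rfl⟩
      have he := hst e
      rw [hx, hy] at he
      subst he
      have hv' : G.Adj x y := hv
      have hv'' : G.Adj y x := hv'.symm
      have hne := hv'.ne
      by_cases hcc : c x = c y
      · refine ⟨exU (p := fun w => AA _ w ∧ colA c t h w ≠ colA c t h _) (.outvert s(x, y)) ?_ ?_ ?_,
          exU (p := fun w => oriA c t h P w _) (.dvert y x) ?_ ?_ ?_,
          exU (p := fun w => oriA c t h P _ w) (.dvert x y) ?_ ?_ ?_⟩
        all_goals first | exact hv' | exact hv'' | trivial | skip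
        all_goals first | (intro w hw; cases w <;> simp [AA, oriA, colA, AuxOk] at hw ⊢ <;> grind) | (simp [AA, oriA, colA]; grind) | (simp [AA, oriA, colA, *]; done)
      · refine ⟨exU (p := fun w => AA _ w ∧ colA c t h w ≠ colA c t h _) (.dvert x y) ?_ ?_ ?_,
          exU (p := fun w => oriA c t h P w _) (.outvert s(x, y)) ?_ ?_ ?_,
          exU (p := fun w => oriA c t h P _ w) (.dvert y x) ?_ ?_ ?_⟩
        all_goals first | exact hv' | exact hv'' | trivial | skip
        all_goals first | (intro w hw; cases w <;> simp [AA, oriA, colA, AuxOk] at hw ⊢ <;> grind) | (simp [AA, oriA, colA]; grind) | (simp [AA, oriA, colA, *]; done)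
    | invert e => exact absurd rfl (hin e)
    | outvert e => exact absurd rfl (hout e)
  have hg2 : ∀ v : AuxVert G, HasDeg3 (AuxGraph G) v →
      (∀ e, v.1 ≠ .invert e) ∧ (∀ e, v.1 ≠ .outvert e) := by
    rintro v ⟨w₁, w₂, w₃, h12, h13, h23, a1, a2, a3, -⟩
    rw [adj_iff_AA] at a1 a2
    obtain ⟨v, hv⟩ := v
    have : w₁.1 ≠ w₂.1 := fun h => h12 (Subtype.ext h)
    obtain ⟨w₁, _⟩ := w₁
    obtain ⟨w₂, _⟩ := w₂
    cases v <;> simp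
    all_goals cases w₁ <;> simp [AA] at a1
    all_goals cases w₂ <;> simp [AA] at a2
    all_goals grind
  refine ⟨fun v => colA c t h v.1, fun v w => oriA c t h P v.1 w.1, ⟨?_, ?_, ?_, ?_, ?_, ?_, ?_⟩, ?_⟩
  · intro x y hxy
    rw [adj_iff_AA]
    obtain ⟨x, hx⟩ := x
    obtain ⟨y, hy⟩ := y
    cases x <;> cases y <;> simp [oriA, AA] at hxy ⊢ <;> grind
  · intro x y h1 h2
    obtain ⟨x, hx⟩ := x
    obtain ⟨y, hy⟩ := y
    have hir : ∀ x y, G.Adj x y → x ≠ y := fun x y h => h.ne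
    clear hgood hg2 hN'
    cases x <;> cases y <;> simp [oriA, AuxOk] at h1 h2 hx hy <;> grind
  · intro x y h1
    rw [adj_iff_AA] at h1
    obtain ⟨x, hx⟩ := x
    obtain ⟨y, hy⟩ := y
    cases x <;> cases y <;> simp [oriA, AA, AuxOk, colA] at h1 hx hy ⊢ <;> grind
  · intro v w₁ w₂ a1 a2 n1 n2
    rw [adj_iff_AA] at a1 a2
    by_cases hv : (∀ e, v.1 ≠ .invert e) ∧ (∀ e, v.1 ≠ .outvert e)
    · exact (hgood v hv.1 hv.2).1.unique ⟨a1, n1⟩ ⟨a2, n2⟩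
    · apply Subtype.ext
      obtain ⟨v, _⟩ := v
      obtain ⟨w₁, _⟩ := w₁
      obtain ⟨w₂, _⟩ := w₂
      cases v <;> simp at hv
      all_goals cases w₁ <;> simp [AA] at a1
      all_goals cases w₂ <;> simp [AA] at a2
      all_goals grind
  · intro v hv w₁ w₂ w₃ o1 o2 o3
    by_cases hv' : ∀ e, v.1 ≠ .invert e
    · exact Or.inl ((hgood v hv' (fun e he => hv ⟨e, he⟩)).2.2.unique o1 o2)
    · push Not at hv'
      obtain ⟨e, he⟩ := hv'
      simp [he, oriA] at o1
  · intro v hv w₁ w₂ o1 o2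
    by_cases hv' : ∀ e, v.1 ≠ .invert e
    · exact (hgood v hv' (fun e he => hv ⟨e, he⟩)).2.1.unique o1 o2
    · push Not at hv'
      obtain ⟨e, he⟩ := hv'
      apply Subtype.ext
      obtain ⟨w₁, _⟩ := w₁
      obtain ⟨w₂, _⟩ := w₂
      cases w₁ <;> simp [he, oriA] at o1
      cases w₂ <;> simp [he, oriA] at o2
      grind
  · rintro v ⟨e, he⟩ w
    obtain ⟨w, _⟩ := w
    cases w <;> simp [he, oriA]
  · intro v hv
    have := hgood v (hg2 v hv).1 (hg2 v hv).2
    simp only [adj_iff_AA]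
    exact this
end

section
/- Let G be a cubic graph (every vertex has degree three) and let H be the corresponding auxiliary graph. If H has a good coloured orientation, then G has a two-coloured perfect matching. -/
section helpers
variable {V : Type*} (G : SimpleGraph V)

def ov (x : V) : AuxVert G := ⟨.orig x, trivial⟩
def dv {x y : V} (h : G.Adj x y) : AuxVert G := ⟨.dvert x y, h⟩
def iv {x y : V} (h : G.Adj x y) : AuxVert G := ⟨.ivert s(x, y), h⟩
def jv {x y : V} (h : G.Adj x y) : AuxVert G := ⟨.jvert s(x, y), h⟩

lemma iv_symm {x y : V} (h : G.Adj x y) : iv G h.symm = iv G h :=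
  Subtype.ext (congrArg AuxV.ivert Sym2.eq_swap)
lemma jv_symm {x y : V} (h : G.Adj x y) : jv G h.symm = jv G h :=
  Subtype.ext (congrArg AuxV.jvert Sym2.eq_swap)

lemma dv_inj {x y z : V} (h : G.Adj x y) (h' : G.Adj x z) (e : dv G h = dv G h') : y = z := by
  have := congrArg Subtype.val e
  simp only [dv, AuxV.dvert.injEq] at this
  exact this.2

lemma ne_of_val {a b : AuxVert G} (h : a.1 ≠ b.1) : a ≠ b := fun e => h (congrArg Subtype.val e)

lemma adj_od {x y : V} (h : G.Adj x y) : (AuxGraph G).Adj (ov G x) (dv G h) := by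
  refine (SimpleGraph.fromRel_adj _ _ _).2 ⟨ne_of_val G (by simp [ov, dv]), Or.inl (Or.inl ⟨x, y, h, rfl, rfl⟩)⟩

lemma adj_di {x y : V} (h : G.Adj x y) : (AuxGraph G).Adj (dv G h) (iv G h) := by
  refine (SimpleGraph.fromRel_adj _ _ _).2 ⟨ne_of_val G (by simp [iv, dv]), Or.inl (Or.inr (Or.inl ⟨x, y, h, rfl, rfl⟩))⟩

lemma adj_dj {x y : V} (h : G.Adj x y) : (AuxGraph G).Adj (dv G h) (jv G h) := by
  refine (SimpleGraph.fromRel_adj _ _ _).2 ⟨ne_of_val G (by simp [jv, dv]),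
    Or.inl (Or.inr (Or.inr (Or.inl ⟨x, y, h, rfl, rfl⟩)))⟩

lemma nbr_o {x : V} {w : AuxVert G} (h : (AuxGraph G).Adj (ov G x) w) :
    ∃ y, ∃ h : G.Adj x y, w = dv G h := by
  obtain ⟨-, h⟩ := (SimpleGraph.fromRel_adj _ _ _).1 h
  obtain ⟨w, hw⟩ := w
  simp only [AuxAdj, ov] at h
  rcases h with (⟨a, b, h, h1, h2⟩ | ⟨a, b, h, h1, h2⟩ | ⟨a, b, h, h1, h2⟩ | ⟨e, h, h1, h2⟩ | ⟨e, h, h1, h2⟩) |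
    (⟨a, b, h, h1, h2⟩ | ⟨a, b, h, h1, h2⟩ | ⟨a, b, h, h1, h2⟩ | ⟨e, h, h1, h2⟩ | ⟨e, h, h1, h2⟩) <;> cases h1 <;> cases h2
  exact ⟨_, ‹G.Adj _ _›, rfl⟩

lemma nbr_d {x y : V} (hxy : G.Adj x y) {w : AuxVert G} (h : (AuxGraph G).Adj (dv G hxy) w) :
    w = ov G x ∨ w = iv G hxy ∨ w = jv G hxy := by
  obtain ⟨-, h⟩ := (SimpleGraph.fromRel_adj _ _ _).1 h
  obtain ⟨w, hw⟩ := w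
  simp only [AuxAdj, dv] at h
  rcases h with (⟨a, b, h, h1, h2⟩ | ⟨a, b, h, h1, h2⟩ | ⟨a, b, h, h1, h2⟩ | ⟨e, h, h1, h2⟩ | ⟨e, h, h1, h2⟩) |
    (⟨a, b, h, h1, h2⟩ | ⟨a, b, h, h1, h2⟩ | ⟨a, b, h, h1, h2⟩ | ⟨e, h, h1, h2⟩ | ⟨e, h, h1, h2⟩) <;> cases h1 <;> cases h2
  · exact Or.inr (Or.inl rfl)
  · exact Or.inr (Or.inr rfl)
  · exact Or.inl rfl

lemma deg3_d {x y : V} (h : G.Adj x y) : HasDeg3 (AuxGraph G) (dv G h) :=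
  ⟨ov G x, iv G h, jv G h, ne_of_val G (by simp [ov, iv]), ne_of_val G (by simp [ov, jv]),
    ne_of_val G (by simp [iv, jv]), (adj_od G h).symm, adj_di G h, adj_dj G h,
    fun _ hw => nbr_d G h hw⟩

lemma deg3_o {x : V} (h : HasDeg3 G x) : HasDeg3 (AuxGraph G) (ov G x) := by
  obtain ⟨a, b, c, hab, hac, hbc, ha, hb, hc, hall⟩ := h
  refine ⟨dv G ha, dv G hb, dv G hc, fun e => hab (dv_inj G _ _ e), fun e => hac (dv_inj G _ _ e),
    fun e => hbc (dv_inj G _ _ e), adj_od G ha, adj_od G hb, adj_od G hc, fun w hw => ?_⟩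
  obtain ⟨y, hy, rfl⟩ := nbr_o G hw
  rcases hall y hy with rfl | rfl | rfl <;> simp

/-- At the vertex `d`, the colours satisfy the exactly-one-opposite rule, and at `i`, `j` at
most one opposite; hence the edge at `u` is dichromatic iff `u`, `v` have the same colour. -/
lemma key (col : AuxVert G → Bool) (orient : AuxVert G → AuxVert G → Prop)
    (hco : IsGoodColOrient (AuxGraph G) (IsOutV G) col orient) {x y : V} (h : G.Adj x y) :
    col (dv G h) ≠ col (ov G x) ↔ col (ov G y) = col (ov G x) := by
  have hm := hco.1.2.2.2.1
  have hd : ∀ {x y : V} (h : G.Adj x y),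
      (col (ov G x) ≠ col (dv G h) ∨ col (iv G h) ≠ col (dv G h) ∨ col (jv G h) ≠ col (dv G h)) ∧
      ¬ (col (ov G x) ≠ col (dv G h) ∧ col (iv G h) ≠ col (dv G h)) ∧
      ¬ (col (ov G x) ≠ col (dv G h) ∧ col (jv G h) ≠ col (dv G h)) ∧
      ¬ (col (iv G h) ≠ col (dv G h) ∧ col (jv G h) ≠ col (dv G h)) := by
    intro x y h
    refine ⟨?_, ?_, ?_, ?_⟩
    · obtain ⟨w, ⟨hw, hc⟩, -⟩ := (hco.2 _ (deg3_d G h)).1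
      rcases nbr_d G h hw with rfl | rfl | rfl <;> simp [hc]
    · rintro ⟨h1, h2⟩
      exact ne_of_val G (by simp [ov, iv]) (hm _ _ _ (adj_od G h).symm (adj_di G h) h1 h2)
    · rintro ⟨h1, h2⟩
      exact ne_of_val G (by simp [ov, jv]) (hm _ _ _ (adj_od G h).symm (adj_dj G h) h1 h2)
    · rintro ⟨h1, h2⟩
      exact ne_of_val G (by simp [iv, jv]) (hm _ _ _ (adj_di G h) (adj_dj G h) h1 h2)
  have hne : dv G h ≠ dv G h.symm := ne_of_val G (by
    simp only [dv, ne_eq, AuxV.dvert.injEq, not_and]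
    exact fun e => absurd e h.ne)
  have hi : ¬ (col (dv G h) ≠ col (iv G h) ∧ col (dv G h.symm) ≠ col (iv G h)) := by
    rintro ⟨h1, h2⟩
    exact hne (hm _ _ _ (adj_di G h).symm (iv_symm G h ▸ (adj_di G h.symm).symm) h1 h2)
  have hj : ¬ (col (dv G h) ≠ col (jv G h) ∧ col (dv G h.symm) ≠ col (jv G h)) := by
    rintro ⟨h1, h2⟩
    exact hne (hm _ _ _ (adj_dj G h).symm (jv_symm G h ▸ (adj_dj G h.symm).symm) h1 h2)
  have h1 := hd h
  have h2 := hd h.symm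
  rw [iv_symm G h, jv_symm G h] at h2
  clear hd hm hco hne
  generalize col (dv G h) = p at *
  generalize col (dv G h.symm) = q at *
  generalize col (iv G h) = i at *
  generalize col (jv G h) = j at *
  generalize col (ov G x) = a at *
  generalize col (ov G y) = b at *
  revert hi hj h1 h2; revert p q i j a b
  set_option synthInstance.maxSize 1000 in set_option synthInstance.maxHeartbeats 200000 in decide

end helpers

/-- If the auxiliary graph `H` of a cubic graph `G` has a good coloured orientation,
then `G` has a two-coloured perfect matching. -/
theorem stmt_16 {V : Type*} (G : SimpleGraph V) (hcubic : ∀ v, HasDeg3 G v)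
    (col : AuxVert G → Bool) (orient : AuxVert G → AuxVert G → Prop)
    (hco : IsGoodColOrient (AuxGraph G) (IsOutV G) col orient) :
    ∃ c : V → Bool, IsTCPM G c := by
  refine ⟨fun x => col (ov G x), fun x => ?_⟩
  obtain ⟨w, ⟨hw, hc⟩, hu⟩ := (hco.2 _ (deg3_o G (hcubic x))).1
  obtain ⟨y, hy, rfl⟩ := nbr_o G hw
  refine ⟨y, ⟨hy, (key G col orient hco hy).1 hc⟩, ?_⟩
  rintro z ⟨hz, hcz⟩
  exact dv_inj G _ _ (hu (dv G hz) ⟨adj_od G hz, (key G col orient hco hz).2 hcz⟩)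
end
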